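/- There is no state ρ^{ABCD} of a quadripartite quantum system on finite-dimensional Hilbert spaces, and no real number t > 0, such that the entropy vector of ρ^{ABCD} equals t · (3, 3, 2, 2, 4, 3, 3, 3, 3, 4, 4, 4, 3, 3, 2), where the coordinates list the entropies of the marginals A, B, C, D, AB, AC, AD, BC, BD, CD, ABC, ABD, ACD, BCD, ABCD in that order. -/

import Mathlib

/-!
The entropies on the ray satisfy `I(A:C|B) = I(B:C|A) = I(A:B|D) = 0`. The proof shows that these
three equations imply `I(A:C) ≤ I(C:D)`, i.e. `S(A) - S(AC) ≤ S(D) - S(CD)` (`constrained`);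
on the ray this reads `0 ≤ -2 t`, which is impossible for `t > 0`.

The tool is a variational form of the relative entropy of `ρ` and `σ = 1 ⊗ ρₘ`, which equals
`S(ρₘ) - S(ρ)`: it is an integral over `t > 0` of the maximum over `X` of the concave quadratic
functional
`func t ρ σ X = 2 Re Tr (X ρ) - Re Tr (Xᴴ σ X) - t Re Tr (X ρ Xᴴ)` (minus a term that depends only
on `Tr ρ`). Its maximisers solve the linear equation `σ X + t X ρ = ρ` (`Stat`). Passing to a
marginal amounts to restricting `X` to operators `1 ⊗ X` on a subsystem (`func_emb`). This yields
strong subadditivity, and in the case of equality the maximisers `X` of the marginal stay maximisers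
for the whole state (`markov`).

From `I(A:C|B) = 0` and `I(B:C|A) = 0` one obtains operators `X t` on `BC` and `Y t` on `AC` that
act identically on `ρ_AB ⊗ 1` from either side (`stat_agree`). Comparing blocks over `C`, there are
operators `x` on `B` and `y` on `A` with the same action on `ρ_AB`. Together with `I(A:B|D) = 0`
this forces `y` to act on `ρ_AD` like an operator `z` on `D` (`transfer`). Gluing the blocks `z`
gives an operator on `CD` at which the functional for `ρ_CD` has the value of the maximum for
`ρ_AC`. Hence the maximum for `ρ_CD` is at least that for `ρ_AC`, and integrating over `t`
(`compare`) gives the inequality.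
-/

open scoped BigOperators ComplexOrder

/-- Von Neumann entropy (base 2) of a matrix: for a Hermitian matrix, the Shannon
entropy of its eigenvalues; junk value `0` for non-Hermitian matrices. -/
noncomputable def vNEntropy {n : Type*} [Fintype n] [DecidableEq n] (M : Matrix n n ℂ) : ℝ :=
  if h : M.IsHermitian then -∑ i, (h.eigenvalues i) * Real.logb 2 (h.eigenvalues i) else 0

/-- A density matrix: positive semidefinite with trace one. -/
def IsState {n : Type*} [Fintype n] [DecidableEq n] (M : Matrix n n ℂ) : Prop :=
  M.PosSemidef ∧ M.trace = 1

section Quad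

variable {A B C D : Type*} [Fintype A] [DecidableEq A] [Fintype B] [DecidableEq B]
  [Fintype C] [DecidableEq C] [Fintype D] [DecidableEq D]
  (ρ : Matrix (A × B × C × D) (A × B × C × D) ℂ)

/-- Entropies of the 15 marginals of a quadripartite state. -/
noncomputable def SA : ℝ :=
  vNEntropy (Matrix.of fun a a' : A => ∑ b, ∑ c, ∑ d, ρ (a, b, c, d) (a', b, c, d))
noncomputable def SB : ℝ :=
  vNEntropy (Matrix.of fun b b' : B => ∑ a, ∑ c, ∑ d, ρ (a, b, c, d) (a, b', c, d))
noncomputable def SC : ℝ :=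
  vNEntropy (Matrix.of fun c c' : C => ∑ a, ∑ b, ∑ d, ρ (a, b, c, d) (a, b, c', d))
noncomputable def SD : ℝ :=
  vNEntropy (Matrix.of fun d d' : D => ∑ a, ∑ b, ∑ c, ρ (a, b, c, d) (a, b, c, d'))
noncomputable def SAB : ℝ :=
  vNEntropy (Matrix.of fun p q : A × B => ∑ c, ∑ d, ρ (p.1, p.2, c, d) (q.1, q.2, c, d))
noncomputable def SAC : ℝ :=
  vNEntropy (Matrix.of fun p q : A × C => ∑ b, ∑ d, ρ (p.1, b, p.2, d) (q.1, b, q.2, d))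
noncomputable def SAD : ℝ :=
  vNEntropy (Matrix.of fun p q : A × D => ∑ b, ∑ c, ρ (p.1, b, c, p.2) (q.1, b, c, q.2))
noncomputable def SBC : ℝ :=
  vNEntropy (Matrix.of fun p q : B × C => ∑ a, ∑ d, ρ (a, p.1, p.2, d) (a, q.1, q.2, d))
noncomputable def SBD : ℝ :=
  vNEntropy (Matrix.of fun p q : B × D => ∑ a, ∑ c, ρ (a, p.1, c, p.2) (a, q.1, c, q.2))
noncomputable def SCD : ℝ :=
  vNEntropy (Matrix.of fun p q : C × D => ∑ a, ∑ b, ρ (a, b, p.1, p.2) (a, b, q.1, q.2))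
noncomputable def SABC : ℝ :=
  vNEntropy (Matrix.of fun p q : A × B × C =>
    ∑ d, ρ (p.1, p.2.1, p.2.2, d) (q.1, q.2.1, q.2.2, d))
noncomputable def SABD : ℝ :=
  vNEntropy (Matrix.of fun p q : A × B × D =>
    ∑ c, ρ (p.1, p.2.1, c, p.2.2) (q.1, q.2.1, c, q.2.2))
noncomputable def SACD : ℝ :=
  vNEntropy (Matrix.of fun p q : A × C × D =>
    ∑ b, ρ (p.1, b, p.2.1, p.2.2) (q.1, b, q.2.1, q.2.2))
noncomputable def SBCD : ℝ :=
  vNEntropy (Matrix.of fun p q : B × C × D =>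
    ∑ a, ρ (a, p.1, p.2.1, p.2.2) (a, q.1, q.2.1, q.2.2))
noncomputable def SABCD : ℝ := vNEntropy ρ

end Quad

set_option linter.unusedSectionVars false

namespace RayI

open Matrix Filter Topology

/-! ### Subsystems and partial traces -/

section Subsystems

variable {n k m : Type*} [Fintype n] [DecidableEq n] [Fintype k] [DecidableEq k]
  [Fintype m] [DecidableEq m]

/-- The operator `1 ⊗ M` on a system `n` that is identified by `e` with the composite of a
subsystem `k` and a subsystem `m`. -/
def emb (e : n ≃ k × m) (M : Matrix m m ℂ) : Matrix n n ℂ :=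
  Matrix.of fun i j => if (e i).1 = (e j).1 then M (e i).2 (e j).2 else 0

/-- The partial trace over the first factor `k` of a system `n ≃ k × m`. -/
def ptr (e : n ≃ k × m) (ρ : Matrix n n ℂ) : Matrix m m ℂ :=
  Matrix.of fun a b => ∑ x, ρ (e.symm (x, a)) (e.symm (x, b))

lemma sum_split (e : n ≃ k × m) (f : n → ℂ) : ∑ i, f i = ∑ x, ∑ a, f (e.symm (x, a)) := by
  rw [← Equiv.sum_comp e.symm, Fintype.sum_prod_type]

lemma emb_mul_apply (e : n ≃ k × m) (M : Matrix m m ℂ) (N : Matrix n n ℂ) (i j : n) :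
    (emb e M * N) i j = ∑ a, M (e i).2 a * N (e.symm ((e i).1, a)) j := by
  rw [Matrix.mul_apply, sum_split e]
  rw [Finset.sum_eq_single (e i).1]
  · simp [emb]
  · intro b _ hb
    simp [emb, hb.symm]
  · simp

lemma mul_emb_apply (e : n ≃ k × m) (M : Matrix m m ℂ) (N : Matrix n n ℂ) (i j : n) :
    (N * emb e M) i j = ∑ a, N i (e.symm ((e j).1, a)) * M a (e j).2 := by
  rw [Matrix.mul_apply, sum_split e]
  rw [Finset.sum_eq_single (e j).1]
  · simp [emb]
  · intro b _ hb
    simp [emb, hb]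
  · simp

lemma emb_mul (e : n ≃ k × m) (M N : Matrix m m ℂ) : emb e (M * N) = emb e M * emb e N := by
  ext i j
  rw [emb_mul_apply]
  by_cases h : (e i).1 = (e j).1 <;> simp [emb, Matrix.mul_apply, h]

lemma emb_one (e : n ≃ k × m) : emb e (1 : Matrix m m ℂ) = 1 := by
  ext i j
  simp only [emb, Matrix.of_apply, Matrix.one_apply]
  by_cases h : i = j
  · simp [h]
  · have : ¬ ((e i).1 = (e j).1 ∧ (e i).2 = (e j).2) := fun h' =>
      h (e.injective (Prod.ext h'.1 h'.2))
    by_cases h1 : (e i).1 = (e j).1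
    · have h2 : ¬ (e i).2 = (e j).2 := fun h2 => this ⟨h1, h2⟩
      simp [h, h1, h2]
    · simp [h, h1]

lemma emb_conjTranspose (e : n ≃ k × m) (M : Matrix m m ℂ) : emb e Mᴴ = (emb e M)ᴴ := by
  ext i j
  by_cases h : (e i).1 = (e j).1
  · simp [emb, h]
  · have h' : ¬ (e j).1 = (e i).1 := fun h' => h h'.symm
    simp [emb, h, h']

lemma emb_add (e : n ≃ k × m) (M N : Matrix m m ℂ) : emb e (M + N) = emb e M + emb e N := by
  ext i j
  by_cases h : (e i).1 = (e j).1 <;> simp [emb, h]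

lemma emb_smul (e : n ≃ k × m) (c : ℂ) (M : Matrix m m ℂ) : emb e (c • M) = c • emb e M := by
  ext i j
  by_cases h : (e i).1 = (e j).1 <;> simp [emb, h]

lemma continuous_emb (e : n ≃ k × m) : Continuous (emb e) := by
  refine continuous_matrix fun i j => ?_
  by_cases h : (e i).1 = (e j).1
  · simp only [emb, h, if_true, Matrix.of_apply]
    fun_prop
  · simp only [emb, h, if_false, Matrix.of_apply]
    fun_prop

lemma ptr_emb_mul (e : n ≃ k × m) (M : Matrix m m ℂ) (N : Matrix n n ℂ) :
    ptr e (emb e M * N) = M * ptr e N := by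
  ext a b
  rw [Matrix.mul_apply]
  simp only [ptr, Matrix.of_apply, emb_mul_apply, Equiv.apply_symm_apply, Finset.mul_sum]
  rw [Finset.sum_comm]

lemma ptr_mul_emb (e : n ≃ k × m) (M : Matrix m m ℂ) (N : Matrix n n ℂ) :
    ptr e (N * emb e M) = ptr e N * M := by
  ext a b
  rw [Matrix.mul_apply]
  simp only [ptr, Matrix.of_apply, mul_emb_apply, Equiv.apply_symm_apply, Finset.sum_mul]
  rw [Finset.sum_comm]

lemma trace_ptr (e : n ≃ k × m) (N : Matrix n n ℂ) : (ptr e N).trace = N.trace := by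
  simp only [Matrix.trace, Matrix.diag_apply, ptr, Matrix.of_apply]
  rw [sum_split e, Finset.sum_comm]

lemma ptr_conjTranspose (e : n ≃ k × m) (N : Matrix n n ℂ) : ptr e Nᴴ = (ptr e N)ᴴ := by
  ext a b
  simp [ptr]

lemma ptr_posSemidef (e : n ≃ k × m) {N : Matrix n n ℂ} (hN : N.PosSemidef) :
    (ptr e N).PosSemidef := by
  have : ptr e N = ∑ x, N.submatrix (fun a => e.symm (x, a)) (fun a => e.symm (x, a)) := by
    ext a b
    simp [ptr, Matrix.sum_apply]
  rw [this]
  exact Matrix.posSemidef_sum _ fun x _ => hN.submatrix _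

end Subsystems

/-! ### Positive semidefinite matrices -/

section PosSemidef

variable {n k m : Type*} [Fintype n] [DecidableEq n] [Fintype k] [DecidableEq k]
  [Fintype m] [DecidableEq m]

/-- The diagonal matrix with the given real entries, as a complex matrix. -/
def rdiag (p : n → ℝ) : Matrix n n ℂ := Matrix.diagonal fun i => (p i : ℂ)

lemma spectral {ρ : Matrix n n ℂ} (h : ρ.IsHermitian) :
    ∃ U : Matrix n n ℂ, U * Uᴴ = 1 ∧ Uᴴ * U = 1 ∧ ρ = U * rdiag h.eigenvalues * Uᴴ := by
  refine ⟨h.eigenvectorUnitary, ?_, ?_, ?_⟩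
  · exact (Matrix.mem_unitaryGroup_iff).1 h.eigenvectorUnitary.2
  · exact (Matrix.mem_unitaryGroup_iff').1 h.eigenvectorUnitary.2
  · exact h.spectral_theorem

lemma exists_factor {ρ : Matrix n n ℂ} (h : ρ.PosSemidef) : ∃ T : Matrix n n ℂ, ρ = Tᴴ * T := by
  obtain ⟨U, -, -, hU⟩ := spectral h.1
  refine ⟨rdiag (fun i => √(h.1.eigenvalues i)) * Uᴴ, ?_⟩
  conv_lhs => rw [hU]
  have : rdiag h.1.eigenvalues = (rdiag (fun i => √(h.1.eigenvalues i)))ᴴ *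
      rdiag (fun i => √(h.1.eigenvalues i)) := by
    simp only [rdiag, Matrix.diagonal_conjTranspose, Matrix.diagonal_mul_diagonal]
    congr 1
    ext i
    simp only [Pi.star_apply, RCLike.star_def, Complex.conj_ofReal]
    rw [← Complex.ofReal_mul, Real.mul_self_sqrt (h.eigenvalues_nonneg i)]
  rw [this]
  simp [Matrix.conjTranspose_mul, Matrix.mul_assoc]

lemma emb_posSemidef (e : n ≃ k × m) {M : Matrix m m ℂ} (h : M.PosSemidef) :
    (emb e M).PosSemidef := by
  obtain ⟨T, rfl⟩ := exists_factor h
  rw [emb_mul, emb_conjTranspose]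
  exact Matrix.posSemidef_conjTranspose_mul_self _

lemma re_trace_nonneg {ρ : Matrix n n ℂ} (h : ρ.PosSemidef) : 0 ≤ ρ.trace.re :=
  (Complex.le_def.1 h.trace_nonneg).1

lemma mul_eq_zero_of_re_trace {ρ M : Matrix n n ℂ} (h : ρ.PosSemidef)
    (h0 : (M * ρ * Mᴴ).trace.re = 0) : M * ρ = 0 := by
  have hp := h.mul_mul_conjTranspose_same M
  have ht : (M * ρ * Mᴴ).trace = 0 := by
    have := Complex.le_def.1 hp.trace_nonneg
    exact Complex.ext h0 (by simpa using this.2.symm)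
  have hz := hp.trace_eq_zero_iff.1 ht
  obtain ⟨T, rfl⟩ := exists_factor h
  have : T * Mᴴ = 0 := by
    rw [← Matrix.conjTranspose_mul_self_eq_zero]
    simpa [Matrix.conjTranspose_mul, Matrix.mul_assoc] using hz
  have h2 : M * Tᴴ = 0 := by
    simpa [Matrix.conjTranspose_mul] using congrArg Matrix.conjTranspose this
  rw [← Matrix.mul_assoc, h2, Matrix.zero_mul]

/-- A Hermitian generalised inverse, here the one given by the spectral decomposition. -/
lemma exists_pinv {ρ : Matrix n n ℂ} (h : ρ.IsHermitian) :
    ∃ R : Matrix n n ℂ, Rᴴ = R ∧ ρ * R = R * ρ ∧ ρ * R * ρ = ρ := by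
  obtain ⟨U, -, h2, hU⟩ := spectral h
  set p := h.eigenvalues
  have hc : ∀ A B : Matrix n n ℂ, (U * A * Uᴴ) * (U * B * Uᴴ) = U * (A * B) * Uᴴ := by
    intro A B
    calc (U * A * Uᴴ) * (U * B * Uᴴ) = U * A * (Uᴴ * U) * B * Uᴴ := by
          simp only [Matrix.mul_assoc]
      _ = _ := by rw [h2]; simp only [Matrix.mul_assoc, Matrix.one_mul]
  refine ⟨U * rdiag (fun i => (p i)⁻¹) * Uᴴ, ?_, ?_, ?_⟩
  · simp only [Matrix.conjTranspose_mul, Matrix.conjTranspose_conjTranspose, Matrix.mul_assoc]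
    congr 2
    simp only [rdiag, Matrix.diagonal_conjTranspose]
    congr 1
    ext i
    simp
  · rw [hU, hc, hc]
    simp only [rdiag, Matrix.diagonal_mul_diagonal, mul_comm]
  · rw [hU, hc, hc]
    congr 2
    simp only [rdiag, Matrix.diagonal_mul_diagonal]
    congr 1
    ext i
    by_cases hi : p i = 0
    · simp [hi]
    · have : (p i : ℂ) ≠ 0 := by exact_mod_cast hi
      simp [this]

/-- The support of a positive semidefinite matrix lies in the support of its marginal:
the support projection `ρₘ R` of the marginal acts trivially on `ρ`. -/
lemma emb_supp_mul (e : n ≃ k × m) {ρ : Matrix n n ℂ} (h : ρ.PosSemidef) {R : Matrix m m ℂ}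
    (hρ : ptr e ρ * R * ptr e ρ = ptr e ρ) :
    emb e (ptr e ρ * R) * ρ = ρ := by
  have hz : emb e (ptr e ρ * R - 1) * ρ = 0 := by
    apply mul_eq_zero_of_re_trace h
    have : (emb e (ptr e ρ * R - 1) * ρ * (emb e (ptr e ρ * R - 1))ᴴ).trace = 0 := by
      rw [← trace_ptr e, ← emb_conjTranspose, ptr_mul_emb, ptr_emb_mul, Matrix.sub_mul, hρ]
      simp
    rw [this]; rfl
  have : emb e (ptr e ρ * R) = emb e (ptr e ρ * R - 1) + 1 := by
    rw [← emb_one e, ← emb_add, sub_add_cancel]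
  rw [this, Matrix.add_mul, hz, Matrix.one_mul, zero_add]

lemma mul_eq_zero_of_marginal (e : n ≃ k × m) {ρ M : Matrix n n ℂ} (h : ρ.PosSemidef)
    (hM : M * emb e (ptr e ρ) = 0) : M * ρ = 0 := by
  obtain ⟨R, -, -, hρ⟩ := exists_pinv (ptr_posSemidef e h).1
  rw [← emb_supp_mul e h hρ, emb_mul, Matrix.mul_assoc, ← Matrix.mul_assoc M, hM,
    Matrix.zero_mul]

end PosSemidef

/-! ### Scalar integral comparison -/

section Scalar

/-- The function `t ↦ ∑ w p log (q + t p)`, a primitive of `t ↦ ∑ w p² / (q + t p)`. -/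
noncomputable def prim {ι : Type*} [Fintype ι] (w p q : ι → ℝ) (t : ℝ) : ℝ :=
  ∑ i, w i * p i * Real.log (q i + t * p i)

variable {ι κ : Type*} [Fintype ι] [Fintype κ]

lemma hasDerivAt_prim {w p q : ι → ℝ} (hp : ∀ i, 0 ≤ p i) (hq : ∀ i, 0 ≤ q i) {t : ℝ}
    (ht : 0 < t) :
    HasDerivAt (prim w p q) (∑ i, w i * (p i ^ 2 / (q i + t * p i))) t := by
  unfold prim
  apply HasDerivAt.fun_sum
  intro i _
  rcases (hp i).eq_or_lt with h | h
  · simpa [← h] using hasDerivAt_const t (0 : ℝ)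
  · have hpos : 0 < q i + t * p i := add_pos_of_nonneg_of_pos (hq i) (mul_pos ht h)
    have h1 : HasDerivAt (fun t => q i + t * p i) (p i) t := by
      simpa using ((hasDerivAt_id t).mul_const (p i)).const_add (q i)
    have h2 := (h1.log hpos.ne').const_mul (w i * p i)
    have e : w i * (p i ^ 2 / (q i + t * p i)) = w i * p i * (p i / (q i + t * p i)) := by ring
    rw [e]
    exact h2

lemma tendsto_prim_zero {w p q : ι → ℝ} (hs : ∀ i, q i = 0 → w i * p i = 0) :
    Tendsto (prim w p q) (𝓝[>] 0) (𝓝 (∑ i, w i * p i * Real.log (q i))) := by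
  unfold prim
  apply tendsto_finsetSum
  intro i _
  by_cases h : q i = 0
  · simp [hs i h]
  · refine Tendsto.const_mul _ ?_
    have hc : ContinuousAt (fun t : ℝ => Real.log (q i + t * p i)) 0 := by
      apply ContinuousAt.log
      · fun_prop
      · simpa using h
    have := hc.tendsto
    simp only [zero_mul, add_zero] at this
    exact this.mono_left nhdsWithin_le_nhds

lemma tendsto_prim_atTop {w p q : ι → ℝ} (hp : ∀ i, 0 ≤ p i) (hq : ∀ i, 0 ≤ q i) :
    Tendsto (fun t => prim w p q t - (∑ i, w i * p i) * Real.log t) atTop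
      (𝓝 (∑ i, w i * p i * Real.log (p i))) := by
  have hcongr : (fun t => ∑ i, w i * p i * Real.log (q i * t⁻¹ + p i)) =ᶠ[atTop]
      (fun t => prim w p q t - (∑ i, w i * p i) * Real.log t) := by
    filter_upwards [eventually_gt_atTop 0] with t ht
    rw [prim, Finset.sum_mul, ← Finset.sum_sub_distrib]
    refine Finset.sum_congr rfl fun i _ => ?_
    rcases (hp i).eq_or_lt with h | h
    · simp [← h]
    · have hpos : 0 < q i + t * p i := add_pos_of_nonneg_of_pos (hq i) (mul_pos ht h)
      rw [← mul_sub, ← Real.log_div hpos.ne' ht.ne']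
      congr 2
      field_simp
  refine Tendsto.congr' hcongr ?_
  apply tendsto_finsetSum
  intro i _
  rcases (hp i).eq_or_lt with h | h
  · simp [← h]
  · refine Tendsto.const_mul _ ?_
    have h1 : Tendsto (fun t : ℝ => q i * t⁻¹ + p i) atTop (𝓝 (q i * 0 + p i)) :=
      (tendsto_inv_atTop_zero.const_mul (q i)).add_const (p i)
    rw [mul_zero, zero_add] at h1
    exact h1.log h.ne'

/-- Comparison of `∑ w p log (p / q)` for two families through the integral representation
`p log (p / q) = ∫ (p² / (q + t p) - p / (1 + t)) dt`, phrased with derivatives: a pointwise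
inequality of the integrands gives an inequality of the sums, and equality of the sums forces
equality of the integrands. -/
lemma compare {w p q : ι → ℝ} {w' p' q' : κ → ℝ}
    (hp : ∀ i, 0 ≤ p i) (hq : ∀ i, 0 ≤ q i) (hs : ∀ i, q i = 0 → w i * p i = 0)
    (hp' : ∀ i, 0 ≤ p' i) (hq' : ∀ i, 0 ≤ q' i) (hs' : ∀ i, q' i = 0 → w' i * p' i = 0)
    (htr : ∑ i, w i * p i = ∑ i, w' i * p' i)
    (h : ∀ t, 0 < t → ∑ i, w' i * (p' i ^ 2 / (q' i + t * p' i)) ≤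
      ∑ i, w i * (p i ^ 2 / (q i + t * p i))) :
    (∑ i, w' i * p' i * (Real.log (p' i) - Real.log (q' i)) ≤
      ∑ i, w i * p i * (Real.log (p i) - Real.log (q i))) ∧
    (∑ i, w i * p i * (Real.log (p i) - Real.log (q i)) ≤
      ∑ i, w' i * p' i * (Real.log (p' i) - Real.log (q' i)) →
      ∀ t, 0 < t → ∑ i, w' i * (p' i ^ 2 / (q' i + t * p' i)) =
        ∑ i, w i * (p i ^ 2 / (q i + t * p i))) := by
  set G : ℝ → ℝ := fun t => prim w p q t - prim w' p' q' t with hG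
  have hderiv : ∀ t, 0 < t → HasDerivAt G (∑ i, w i * (p i ^ 2 / (q i + t * p i)) -
      ∑ i, w' i * (p' i ^ 2 / (q' i + t * p' i))) t := fun t ht =>
    (hasDerivAt_prim hp hq ht).sub (hasDerivAt_prim hp' hq' ht)
  have hmono : MonotoneOn G (Set.Ioi 0) := by
    apply monotoneOn_of_deriv_nonneg (convex_Ioi 0)
    · exact fun t ht => (hderiv t ht).continuousAt.continuousWithinAt
    · rw [interior_Ioi]
      exact fun t ht => (hderiv t ht).differentiableAt.differentiableWithinAt
    · rw [interior_Ioi]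
      intro t ht
      rw [(hderiv t ht).deriv]
      exact sub_nonneg.2 (h t ht)
  have h0 := (tendsto_prim_zero hs).sub (tendsto_prim_zero hs')
  have h1 : Tendsto G atTop (𝓝 (∑ i, w i * p i * Real.log (p i) -
      ∑ i, w' i * p' i * Real.log (p' i))) := by
    refine ((tendsto_prim_atTop hp hq).sub (tendsto_prim_atTop hp' hq')).congr fun t => ?_
    rw [htr, hG]
    ring
  set L0 := ∑ i, w i * p i * Real.log (q i) - ∑ i, w' i * p' i * Real.log (q' i) with hL0
  set L1 := ∑ i, w i * p i * Real.log (p i) - ∑ i, w' i * p' i * Real.log (p' i) with hL1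
  have hlow : ∀ t, 0 < t → L0 ≤ G t := by
    intro t ht
    refine le_of_tendsto h0 ?_
    filter_upwards [Ioo_mem_nhdsGT ht] with s hs
    exact hmono hs.1 ht hs.2.le
  have hupp : ∀ t, 0 < t → G t ≤ L1 := by
    intro t ht
    refine ge_of_tendsto h1 ?_
    filter_upwards [eventually_ge_atTop t] with s hs
    exact hmono ht (ht.trans_le hs) hs
  have hd : ∑ i, w i * p i * (Real.log (p i) - Real.log (q i)) -
      ∑ i, w' i * p' i * (Real.log (p' i) - Real.log (q' i)) = L1 - L0 := by
    simp only [mul_sub, Finset.sum_sub_distrib, hL0, hL1]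
    ring
  refine ⟨?_, ?_⟩
  · have := (hlow 1 one_pos).trans (hupp 1 one_pos)
    linarith
  · intro hle t ht
    have hconst : G =ᶠ[𝓝 t] fun _ => L0 := by
      filter_upwards [Ioi_mem_nhds ht] with s hs
      have := hlow s hs
      have := hupp s hs
      linarith
    have := (hderiv t ht).unique ((hasDerivAt_const t L0).congr_of_eventuallyEq hconst)
    linarith

end Scalar

/-! ### The variational functional -/

section Variational

variable {n k m : Type*} [Fintype n] [DecidableEq n] [Fintype k] [DecidableEq k]
  [Fintype m] [DecidableEq m]

/-- The concave quadratic functional of `X` whose maximum over all `X` is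
`∑ |⟨j, i⟩|² pᵢ² / (qⱼ + t pᵢ)`, where `p`, `q` are the eigenvalues of `ρ`, `σ`. -/
def func (t : ℝ) (ρ σ X : Matrix n n ℂ) : ℝ :=
  2 * (X * ρ).trace.re - (Xᴴ * (σ * X)).trace.re - t * (X * ρ * Xᴴ).trace.re

/-- The stationarity equation of `func t ρ σ`. -/
def Stat (t : ℝ) (ρ σ X : Matrix n n ℂ) : Prop := σ * X + (t : ℂ) • (X * ρ) = ρ

lemma re_trace_conjTranspose (M : Matrix n n ℂ) : (Mᴴ).trace.re = M.trace.re := by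
  rw [Matrix.trace_conjTranspose]; simp

lemma func_congr {t : ℝ} {ρ σ X Y : Matrix n n ℂ} (hρ : ρ.IsHermitian) (h1 : X * ρ = Y * ρ)
    (h2 : σ * X = σ * Y) (hσ : σ.IsHermitian) : func t ρ σ X = func t ρ σ Y := by
  have h1' : ρ * Xᴴ = ρ * Yᴴ := by
    have := congrArg Matrix.conjTranspose h1
    simpa [Matrix.conjTranspose_mul, hρ.eq] using this
  have h2' : Xᴴ * σ = Yᴴ * σ := by
    have := congrArg Matrix.conjTranspose h2
    simpa [Matrix.conjTranspose_mul, hσ.eq] using this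
  have h3 : X * ρ * Xᴴ = Y * ρ * Yᴴ := by
    rw [h1, Matrix.mul_assoc, h1', ← Matrix.mul_assoc]
  have h4 : Xᴴ * (σ * X) = Yᴴ * (σ * Y) := by
    rw [h2, ← Matrix.mul_assoc, h2', Matrix.mul_assoc]
  rw [func, func, h3, h4, h1]

/-- The functional is compatible with restriction to a subsystem; this is what makes relative
entropy monotone under partial traces. -/
lemma func_emb (t : ℝ) (e : n ≃ k × m) (ρ σ : Matrix n n ℂ) (X : Matrix m m ℂ) :
    func t ρ σ (emb e X) = func t (ptr e ρ) (ptr e σ) X := by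
  simp only [func]
  rw [← trace_ptr e (emb e X * ρ), ← trace_ptr e ((emb e X)ᴴ * _),
    ← trace_ptr e (emb e X * ρ * _), ← emb_conjTranspose, ptr_emb_mul, ptr_emb_mul, ptr_mul_emb,
    ptr_mul_emb, ptr_emb_mul]

/-- Completing the square at a stationary point. -/
lemma func_eq_sub {t : ℝ} {ρ σ X₀ : Matrix n n ℂ} (hρ : ρ.IsHermitian) (hσ : σ.IsHermitian)
    (h : Stat t ρ σ X₀) (X : Matrix n n ℂ) :
    func t ρ σ X = (X₀ * ρ).trace.re - ((X - X₀)ᴴ * (σ * (X - X₀))).trace.re -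
      t * ((X - X₀) * ρ * (X - X₀)ᴴ).trace.re := by
  have key : ∀ Z : Matrix n n ℂ, (Z * ρ).trace.re =
      (Zᴴ * (σ * X₀)).trace.re + t * (X₀ * ρ * Zᴴ).trace.re := by
    intro Z
    rw [← re_trace_conjTranspose, Matrix.conjTranspose_mul, hρ.eq, Matrix.trace_mul_comm]
    conv_lhs => rw [← h]
    rw [Matrix.mul_add, Matrix.trace_add, Complex.add_re, Matrix.mul_smul, Matrix.trace_smul,
      Matrix.trace_mul_comm Zᴴ (X₀ * ρ)]
    simp
  have kX := key X
  have k0 := key X₀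
  have s1 : (X₀ᴴ * (σ * X)).trace.re = (Xᴴ * (σ * X₀)).trace.re := by
    rw [← re_trace_conjTranspose]
    simp [Matrix.conjTranspose_mul, hσ.eq, Matrix.mul_assoc]
  have s2 : (X * ρ * X₀ᴴ).trace.re = (X₀ * ρ * Xᴴ).trace.re := by
    rw [← re_trace_conjTranspose]
    simp [Matrix.conjTranspose_mul, hρ.eq, Matrix.mul_assoc]
  simp only [func, Matrix.conjTranspose_sub, Matrix.sub_mul, Matrix.mul_sub, Matrix.trace_sub,
    Complex.sub_re]
  rw [s1, s2]
  linarith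

lemma func_le {t : ℝ} (ht : 0 < t) {ρ σ X₀ : Matrix n n ℂ} (hρ : ρ.PosSemidef)
    (hσ : σ.PosSemidef) (h : Stat t ρ σ X₀) (X : Matrix n n ℂ) :
    func t ρ σ X ≤ (X₀ * ρ).trace.re := by
  rw [func_eq_sub hρ.1 hσ.1 h]
  have h1 := re_trace_nonneg (hσ.conjTranspose_mul_mul_same (X - X₀))
  have h2 := re_trace_nonneg (hρ.mul_mul_conjTranspose_same (X - X₀))
  rw [Matrix.mul_assoc] at h1
  nlinarith

lemma func_stat {t : ℝ} {ρ σ X₀ : Matrix n n ℂ} (hρ : ρ.IsHermitian) (hσ : σ.IsHermitian)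
    (h : Stat t ρ σ X₀) : func t ρ σ X₀ = (X₀ * ρ).trace.re := by
  rw [func_eq_sub hρ hσ h]
  simp

/-- Every maximiser of `func t ρ σ` agrees with a given stationary point on the supports. -/
lemma eq_of_func_eq {t : ℝ} (ht : 0 < t) {ρ σ X₀ X : Matrix n n ℂ} (hρ : ρ.PosSemidef)
    (hσ : σ.PosSemidef) (h : Stat t ρ σ X₀) (hX : func t ρ σ X = (X₀ * ρ).trace.re) :
    X * ρ = X₀ * ρ ∧ σ * X = σ * X₀ := by
  rw [func_eq_sub hρ.1 hσ.1 h] at hX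
  have h1 := re_trace_nonneg (hσ.conjTranspose_mul_mul_same (X - X₀))
  have h2 := re_trace_nonneg (hρ.mul_mul_conjTranspose_same (X - X₀))
  rw [Matrix.mul_assoc] at h1
  have h3 : ((X - X₀) * ρ * (X - X₀)ᴴ).trace.re = 0 := by
    have := mul_nonneg ht.le h2
    have h' : t * ((X - X₀) * ρ * (X - X₀)ᴴ).trace.re = 0 := by linarith
    exact (mul_eq_zero.1 h').resolve_left ht.ne'
  have h4 : ((X - X₀)ᴴ * σ * ((X - X₀)ᴴ)ᴴ).trace.re = 0 := by
    rw [h3] at hX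
    rw [Matrix.conjTranspose_conjTranspose, Matrix.mul_assoc]
    linarith
  have h5 := mul_eq_zero_of_re_trace hρ h3
  have h6 := congrArg Matrix.conjTranspose (mul_eq_zero_of_re_trace hσ h4)
  simp only [Matrix.conjTranspose_mul, Matrix.conjTranspose_conjTranspose, hσ.1.eq,
    Matrix.conjTranspose_zero] at h6
  rw [Matrix.sub_mul, sub_eq_zero] at h5
  rw [Matrix.mul_sub, sub_eq_zero] at h6
  exact ⟨h5, h6⟩

lemma stat_unique {t : ℝ} (ht : 0 < t) {ρ σ X Y : Matrix n n ℂ} (hρ : ρ.PosSemidef)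
    (hσ : σ.PosSemidef) (hX : Stat t ρ σ X) (hY : Stat t ρ σ Y) :
    X * ρ = Y * ρ ∧ σ * X = σ * Y := by
  apply eq_of_func_eq ht hρ hσ hY
  have h1 := func_le ht hρ hσ hX Y
  have h2 := func_le ht hρ hσ hY X
  rw [func_stat hρ.1 hσ.1 hX] at *
  rw [func_stat hρ.1 hσ.1 hY] at h1
  linarith

end Variational

/-! ### Families of stationary points and relative entropy -/

section Resolvent

variable {n k m : Type*} [Fintype n] [DecidableEq n] [Fintype k] [DecidableEq k]
  [Fintype m] [DecidableEq m]

/-- A family `X t`, `t > 0`, of stationary points of `func t ρ σ` with `t X t → P` as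
`t → ∞`, where `P` fixes `ρ` and each `X t` is unchanged by `Pᴴ` on the right. In the families
constructed below `P` is the support projection of `ρ`. -/
structure Res (ρ σ : Matrix n n ℂ) (X : ℝ → Matrix n n ℂ) (P : Matrix n n ℂ) : Prop where
  stat : ∀ t, 0 < t → Stat t ρ σ (X t)
  lim : Tendsto (fun t : ℝ => (t : ℂ) • X t) atTop (𝓝 P)
  supp : ∀ t, X t * Pᴴ = X t
  proj : P * ρ = ρ

lemma tendsto_frac {p q : ℝ} :
    Tendsto (fun t : ℝ => t * (p / (q + t * p))) atTop (𝓝 (if p = 0 then 0 else 1)) := by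
  by_cases h : p = 0
  · simp [h]
  · rw [if_neg h]
    have h1 : Tendsto (fun t : ℝ => p / (q * t⁻¹ + p)) atTop (𝓝 (p / (q * 0 + p))) := by
      refine Tendsto.div tendsto_const_nhds
        ((tendsto_inv_atTop_zero.const_mul q).add_const p) (by simpa using h)
    rw [mul_zero, zero_add, div_self h] at h1
    refine h1.congr' ?_
    filter_upwards [eventually_gt_atTop 0] with t ht
    have e : q + t * p = t * (q * t⁻¹ + p) := by field_simp
    rw [e, mul_div_assoc', mul_div_mul_left _ _ ht.ne']

/-- The explicit solution of the stationarity equation in eigenbases of `ρ` and `σ`. -/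
lemma exists_res {ρ σ U V : Matrix n n ℂ} {p q : n → ℝ} (hp : ∀ i, 0 ≤ p i)
    (hq : ∀ i, 0 ≤ q i) (hU : Uᴴ * U = 1) (hV : V * Vᴴ = 1)
    (hV' : Vᴴ * V = 1) (hρ : ρ = U * rdiag p * Uᴴ) (hσ : σ = V * rdiag q * Vᴴ) :
    ∃ X P, Res ρ σ X P ∧ ∀ t, 0 < t → (X t * ρ).trace.re =
      ∑ z : n × n, Complex.normSq ((Vᴴ * U) z.1 z.2) *
        (p z.2 ^ 2 / (q z.1 + t * p z.2)) := by
  set W := Vᴴ * U with hW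
  set K : ℝ → Matrix n n ℂ := fun t =>
    Matrix.of fun j i => W j i * ((p i / (q j + t * p i) : ℝ) : ℂ) with hK
  set δ : n → ℝ := fun i => if p i = 0 then 0 else 1 with hδ
  have hVW : ∀ M : Matrix n n ℂ, V * (W * M) * Uᴴ = U * M * Uᴴ := by
    intro M
    rw [hW, ← Matrix.mul_assoc, ← Matrix.mul_assoc, hV, Matrix.one_mul]
  have hKU : ∀ M N : Matrix n n ℂ, (V * M * Uᴴ) * (U * N * Uᴴ) = V * (M * N) * Uᴴ := by
    intro M N
    calc _ = V * M * (Uᴴ * U) * N * Uᴴ := by simp only [Matrix.mul_assoc]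
      _ = _ := by rw [hU]; simp only [Matrix.mul_assoc, Matrix.one_mul]
  have hUU : ∀ M N : Matrix n n ℂ, (U * M * Uᴴ) * (U * N * Uᴴ) = U * (M * N) * Uᴴ := by
    intro M N
    calc _ = U * M * (Uᴴ * U) * N * Uᴴ := by simp only [Matrix.mul_assoc]
      _ = _ := by rw [hU]; simp only [Matrix.mul_assoc, Matrix.one_mul]
  have hVK : ∀ M N : Matrix n n ℂ, (V * M * Vᴴ) * (V * N * Uᴴ) = V * (M * N) * Uᴴ := by
    intro M N
    calc _ = V * M * (Vᴴ * V) * N * Uᴴ := by simp only [Matrix.mul_assoc]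
      _ = _ := by rw [hV']; simp only [Matrix.mul_assoc, Matrix.one_mul]
  refine ⟨fun t => V * K t * Uᴴ, U * rdiag δ * Uᴴ, ⟨?_, ?_, ?_, ?_⟩, ?_⟩
  · intro t ht
    simp only [Stat]
    rw [hσ, hVK, hρ, hKU, ← hVW, ← Matrix.smul_mul, ← Matrix.mul_smul, ← Matrix.add_mul,
      ← Matrix.mul_add]
    congr 2
    ext j i
    simp only [rdiag, Matrix.add_apply, Matrix.smul_apply, Matrix.diagonal_mul,
      Matrix.mul_diagonal, hK, Matrix.of_apply, smul_eq_mul]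
    have e : p i / (q j + t * p i) * (q j + t * p i) = p i := by
      by_cases h : q j + t * p i = 0
      · have := mul_nonneg ht.le (hp i)
        have h0 : t * p i = 0 := by linarith [hq j]
        have : p i = 0 := (mul_eq_zero.1 h0).resolve_left ht.ne'
        simp [this]
      · rw [div_mul_cancel₀ _ h]
    have e' : ((p i / (q j + t * p i) : ℝ) : ℂ) * (q j + t * p i) = p i := by
      exact_mod_cast e
    linear_combination W j i * e'
  · have h1 : Tendsto (fun t : ℝ => (t : ℂ) • K t) atTop (𝓝 (W * rdiag δ)) := by
      refine tendsto_pi_nhds.2 fun j => tendsto_pi_nhds.2 fun i => ?_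
      have h2 : Tendsto (fun t : ℝ => W j i * ((t * (p i / (q j + t * p i)) : ℝ) : ℂ)) atTop
          (𝓝 (W j i * ((δ i : ℝ) : ℂ))) :=
        ((Complex.continuous_ofReal.tendsto _).comp tendsto_frac).const_mul _
      simp only [rdiag, Matrix.mul_diagonal]
      refine h2.congr fun t => ?_
      simp only [hK, Matrix.smul_apply, Matrix.of_apply, smul_eq_mul, Complex.ofReal_mul]
      ring
    have hc : Continuous fun M : Matrix n n ℂ => V * M * Uᴴ := by fun_prop
    have h2 := (hc.tendsto _).comp h1
    rw [hVW] at h2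
    refine h2.congr fun t => ?_
    simp
  · intro t
    have : (U * rdiag δ * Uᴴ)ᴴ = U * rdiag δ * Uᴴ := by
      have hd : (rdiag δ)ᴴ = rdiag δ := by
        simp only [rdiag, Matrix.diagonal_conjTranspose]
        congr 1
        ext i
        simp
      simp [Matrix.conjTranspose_mul, hd, Matrix.mul_assoc]
    rw [this, hKU]
    congr 2
    ext j i
    by_cases h : p i = 0 <;> simp [rdiag, Matrix.mul_diagonal, hK, hδ, h]
  · rw [hρ, hUU]
    congr 2
    simp only [rdiag, Matrix.diagonal_mul_diagonal]
    congr 1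
    ext j
    by_cases h : p j = 0 <;> simp [hδ, h]
  · intro t ht
    simp only []
    rw [hρ, hKU, Matrix.mul_assoc, Matrix.trace_mul_comm, Matrix.mul_assoc,
      ← Matrix.trace_mul_comm (Uᴴ * V)]
    have : Uᴴ * V = Wᴴ := by simp [hW, Matrix.conjTranspose_mul]
    rw [this, Matrix.trace, Complex.re_sum, Fintype.sum_prod_type, Finset.sum_comm]
    refine Finset.sum_congr rfl fun i _ => ?_
    rw [Matrix.diag_apply, Matrix.mul_apply, Complex.re_sum]
    refine Finset.sum_congr rfl fun j _ => ?_
    simp only [rdiag, Matrix.mul_diagonal, hK, Matrix.of_apply, Matrix.conjTranspose_apply]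
    have : star (W j i) * (W j i * ((p i / (q j + t * p i) : ℝ) : ℂ) * (p i : ℂ)) =
      ((Complex.normSq (W j i) * (p i ^ 2 / (q j + t * p i)) : ℝ) : ℂ) := by
      rw [Complex.ofReal_mul, Complex.normSq_eq_conj_mul_self]
      push_cast
      simp only [RCLike.star_def]
      ring
    rw [this, Complex.ofReal_re]

/-- A resolvent family for the pair `ρ, σ` together with a scalar description of the maxima of
`func t ρ σ`; the number `d` is the relative entropy `Tr ρ (log ρ - log σ)`. -/
structure Rel (ρ σ : Matrix n n ℂ) (d : ℝ) (X : ℝ → Matrix n n ℂ) (P : Matrix n n ℂ) :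
    Prop where
  res : Res ρ σ X P
  data : ∃ w p q : n × n → ℝ, (∀ z, 0 ≤ p z) ∧ (∀ z, 0 ≤ q z) ∧
    (∀ z, q z = 0 → w z * p z = 0) ∧ ∑ z, w z * p z = ρ.trace.re ∧
    ∑ z, w z * p z * (Real.log (p z) - Real.log (q z)) = d ∧
    ∀ t, 0 < t → (X t * ρ).trace.re = ∑ z, w z * (p z ^ 2 / (q z + t * p z))

lemma log_two_mul_vNEntropy {ρ : Matrix n n ℂ} (h : ρ.IsHermitian) :
    Real.log 2 * vNEntropy ρ = -∑ i, h.eigenvalues i * Real.log (h.eigenvalues i) := by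
  have h2 : Real.log 2 ≠ 0 := (Real.log_pos one_lt_two).ne'
  rw [vNEntropy, dif_pos h, mul_neg, Finset.mul_sum]
  congr 1
  refine Finset.sum_congr rfl fun i _ => ?_
  rw [Real.logb]
  field_simp

/-- The relative entropy of `ρ` and `1 ⊗ ρₘ` is the negative conditional entropy
`S(ρₘ) - S(ρ)`. -/
lemma exists_rel (e : n ≃ k × m) {ρ : Matrix n n ℂ} (hρ : ρ.PosSemidef) :
    ∃ X P, Rel ρ (emb e (ptr e ρ))
      (Real.log 2 * (vNEntropy (ptr e ρ) - vNEntropy ρ)) X P := by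
  have hm := ptr_posSemidef e hρ
  obtain ⟨U, -, hU, hUρ⟩ := spectral hρ.1
  obtain ⟨V, hV, hV', hVm⟩ := spectral hm.1
  set p := hρ.1.eigenvalues with hp
  set q := hm.1.eigenvalues with hq
  have hp0 : ∀ i, 0 ≤ p i := hρ.eigenvalues_nonneg
  have hq0 : ∀ i, 0 ≤ q i := hm.eigenvalues_nonneg
  have hE : emb e V * (emb e V)ᴴ = 1 := by
    rw [← emb_conjTranspose, ← emb_mul, hV, emb_one]
  have hE' : (emb e V)ᴴ * emb e V = 1 := by
    rw [← emb_conjTranspose, ← emb_mul, hV', emb_one]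
  have hrd : emb e (rdiag q) = rdiag fun j => q (e j).2 := by
    rw [rdiag, rdiag]
    ext i j
    by_cases h : i = j
    · subst h; simp [emb]
    · have h' : ¬ ((e i).1 = (e j).1 ∧ (e i).2 = (e j).2) := fun h' =>
        h (e.injective (Prod.ext h'.1 h'.2))
      by_cases h1 : (e i).1 = (e j).1
      · have h2 : ¬ (e i).2 = (e j).2 := fun h2 => h' ⟨h1, h2⟩
        simp [emb, h, h1, h2]
      · simp [emb, h, h1]
  have hσ : emb e (ptr e ρ) = emb e V * (rdiag fun j => q (e j).2) * (emb e V)ᴴ := by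
    rw [← hrd, ← emb_conjTranspose, ← emb_mul, ← emb_mul, ← hVm]
  obtain ⟨X, P, hR, hX⟩ := exists_res hp0 (fun j => hq0 (e j).2) hU hE hE' hUρ hσ
  set W := (emb e V)ᴴ * U with hW
  have hWW : Wᴴ * W = 1 := by
    have : Wᴴ * W = Uᴴ * (emb e V * (emb e V)ᴴ) * U := by
      simp [hW, Matrix.conjTranspose_mul, Matrix.mul_assoc]
    rw [this, hE, Matrix.mul_one, hU]
  have hcol : ∀ i, ∑ j, Complex.normSq (W j i) = 1 := by
    intro i
    have := congrFun (congrFun hWW i) i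
    rw [Matrix.mul_apply, Matrix.one_apply_eq] at this
    have h2 : ((∑ j, Complex.normSq (W j i) : ℝ) : ℂ) = 1 := by
      rw [← this]
      push_cast
      refine Finset.sum_congr rfl fun j _ => ?_
      rw [Complex.normSq_eq_conj_mul_self]; rfl
    exact_mod_cast h2
  set r : n → ℝ := fun j => ∑ i, Complex.normSq (W j i) * p i with hr
  have hr1 : ∀ j, (r j : ℂ) = ((emb e V)ᴴ * ρ * emb e V) j j := by
    intro j
    have : (emb e V)ᴴ * ρ * emb e V = W * rdiag p * Wᴴ := by
      conv_lhs => rw [hUρ]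
      simp [hW, Matrix.conjTranspose_mul, Matrix.mul_assoc]
    rw [this, Matrix.mul_apply, hr]
    push_cast
    refine Finset.sum_congr rfl fun i _ => ?_
    rw [Complex.normSq_eq_conj_mul_self, rdiag, Matrix.mul_diagonal, Matrix.conjTranspose_apply,
      RCLike.star_def]
    ring
  have hr2 : ∀ a, ∑ x, r (e.symm (x, a)) = q a := by
    intro a
    have h1 : ptr e ((emb e V)ᴴ * ρ * emb e V) = rdiag q := by
      rw [← emb_conjTranspose, ptr_mul_emb, ptr_emb_mul]
      rw [hVm]
      calc Vᴴ * (V * rdiag q * Vᴴ) * V = (Vᴴ * V) * rdiag q * (Vᴴ * V) := by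
            simp only [Matrix.mul_assoc]
        _ = _ := by rw [hV']; simp
    have h2 := congrFun (congrFun h1 a) a
    simp only [ptr, Matrix.of_apply, ← hr1, rdiag, Matrix.diagonal_apply_eq] at h2
    exact_mod_cast h2
  have hr0 : ∀ j, 0 ≤ r j := fun j =>
    Finset.sum_nonneg fun i _ => mul_nonneg (Complex.normSq_nonneg _) (hp0 i)
  refine ⟨X, P, hR, fun z => Complex.normSq (W z.1 z.2), fun z => p z.2, fun z => q (e z.1).2,
    fun z => hp0 _, fun z => hq0 _, ?_, ?_, ?_, hX⟩
  · rintro ⟨j, i⟩ h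
    simp only at h ⊢
    have h1 := hr2 (e j).2
    rw [h, Finset.sum_eq_zero_iff_of_nonneg (fun x _ => hr0 _)] at h1
    have h2 := h1 (e j).1 (Finset.mem_univ _)
    simp only [Prod.mk.eta, Equiv.symm_apply_apply] at h2
    rw [hr, Finset.sum_eq_zero_iff_of_nonneg
      (fun i _ => mul_nonneg (Complex.normSq_nonneg _) (hp0 i))] at h2
    exact h2 i (Finset.mem_univ _)
  · rw [Fintype.sum_prod_type, Finset.sum_comm]
    simp only [← Finset.sum_mul, hcol, one_mul]
    have : ρ.trace = ((∑ i, p i : ℝ) : ℂ) := by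
      rw [hρ.1.trace_eq_sum_eigenvalues]; push_cast; rfl
    rw [this, Complex.ofReal_re]
  · rw [mul_sub, log_two_mul_vNEntropy hm.1, log_two_mul_vNEntropy hρ.1]
    simp only [mul_sub, Finset.sum_sub_distrib]
    have e1 : ∑ z : n × n, Complex.normSq (W z.1 z.2) * p z.2 * Real.log (p z.2) =
        ∑ i, p i * Real.log (p i) := by
      rw [Fintype.sum_prod_type, Finset.sum_comm]
      simp only [← Finset.sum_mul, hcol, one_mul]
    have e2 : ∑ z : n × n, Complex.normSq (W z.1 z.2) * p z.2 * Real.log (q (e z.1).2) =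
        ∑ a, q a * Real.log (q a) := by
      rw [Fintype.sum_prod_type]
      simp only [← Finset.sum_mul]
      rw [← Equiv.sum_comp e.symm, Fintype.sum_prod_type, Finset.sum_comm]
      refine Finset.sum_congr rfl fun a _ => ?_
      simp only [Equiv.apply_symm_apply, ← Finset.sum_mul]
      rw [← hr2 a]
    rw [e1, e2]
    ring

/-- Comparison of the relative entropies of two pairs through the maxima of `func`. -/
lemma Rel.compare {ρ σ P : Matrix n n ℂ} {X : ℝ → Matrix n n ℂ} {ρ' σ' P' : Matrix m m ℂ}
    {X' : ℝ → Matrix m m ℂ} {d d' : ℝ} (h : Rel ρ σ d X P) (h' : Rel ρ' σ' d' X' P')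
    (htr : ρ.trace = ρ'.trace)
    (hle : ∀ t, 0 < t → (X' t * ρ').trace.re ≤ (X t * ρ).trace.re) :
    d' ≤ d ∧ (d ≤ d' → ∀ t, 0 < t → (X' t * ρ').trace.re = (X t * ρ).trace.re) := by
  obtain ⟨w, p, q, hp, hq, hs, hsum, hd, hX⟩ := h.data
  obtain ⟨w', p', q', hp', hq', hs', hsum', hd', hX'⟩ := h'.data
  have := RayI.compare hp hq hs hp' hq' hs' (by rw [hsum, hsum', htr]) (by
    intro t ht
    rw [← hX t ht, ← hX' t ht]
    exact hle t ht)
  rw [hd, hd'] at this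
  refine ⟨this.1, fun hdd t ht => ?_⟩
  rw [hX t ht, hX' t ht]
  exact this.2 hdd t ht

end Resolvent

/-! ### Equality in strong subadditivity -/

section Markov

variable {n k m l s l' u : Type*} [Fintype n] [DecidableEq n] [Fintype k] [DecidableEq k]
  [Fintype m] [DecidableEq m] [Fintype l] [DecidableEq l] [Fintype s] [DecidableEq s]
  [Fintype l'] [DecidableEq l'] [Fintype u] [DecidableEq u]

/-- Equality in strong subadditivity: the stationary points for the marginal on `m` remain
stationary for the whole state. -/
lemma markov (e1 : n ≃ k × m) (e2 : n ≃ l × s) (e3 : m ≃ l' × u) {ρ : Matrix n n ℂ}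
    (hρ : ρ.PosSemidef)
    (hc : ptr e1 (emb e2 (ptr e2 ρ)) = emb e3 (ptr e3 (ptr e1 ρ)))
    (hS : vNEntropy ρ + vNEntropy (ptr e3 (ptr e1 ρ)) =
      vNEntropy (ptr e2 ρ) + vNEntropy (ptr e1 ρ))
    {X : ℝ → Matrix m m ℂ} {P : Matrix m m ℂ}
    (h : Rel (ptr e1 ρ) (emb e3 (ptr e3 (ptr e1 ρ)))
      (Real.log 2 * (vNEntropy (ptr e3 (ptr e1 ρ)) - vNEntropy (ptr e1 ρ))) X P)
    {t : ℝ} (ht : 0 < t) : Stat t ρ (emb e2 (ptr e2 ρ)) (emb e1 (X t)) := by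
  obtain ⟨X₀, P₀, h₀⟩ := exists_rel e2 hρ
  have hσ := emb_posSemidef e2 (ptr_posSemidef e2 hρ)
  have hm := ptr_posSemidef e1 hρ
  have hσm := emb_posSemidef e3 (ptr_posSemidef e3 hm)
  have hf : ∀ t, 0 < t → func t ρ (emb e2 (ptr e2 ρ)) (emb e1 (X t)) =
      (X t * ptr e1 ρ).trace.re := by
    intro t ht
    rw [func_emb, hc, func_stat hm.1 hσm.1 (h.res.stat t ht)]
  have hcmp := Rel.compare h₀ h (trace_ptr e1 ρ).symm (fun t ht => by
    rw [← hf t ht]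
    exact func_le ht hρ hσ (h₀.res.stat t ht) _)
  have hd : vNEntropy (ptr e2 ρ) - vNEntropy ρ =
      vNEntropy (ptr e3 (ptr e1 ρ)) - vNEntropy (ptr e1 ρ) := by linarith
  have heq := hcmp.2 (by rw [hd]) t ht
  rw [← hf t ht] at heq
  obtain ⟨h1, h2⟩ := eq_of_func_eq ht hρ hσ (h₀.res.stat t ht) heq
  rw [Stat, h1, h2]
  exact h₀.res.stat t ht

/-- Two families of stationary points for the same pair agree on both sides of `σ`. The product
`σ X` is unique by strict concavity. For `X σ`, the stationarity equation turns
`X s * (t X t)ᴴ * σ` into an expression in `X s * ρ` and `ρ * (X t)ᴴ`, which are unique as well,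
and `t → ∞` gives the claim. -/
lemma stat_agree {ρ σ P Q : Matrix n n ℂ} {X Y : ℝ → Matrix n n ℂ} (hρ : ρ.PosSemidef)
    (hσ : σ.PosSemidef)
    (hX : ∀ t, 0 < t → Stat t ρ σ (X t)) (hY : ∀ t, 0 < t → Stat t ρ σ (Y t))
    (hXP : Tendsto (fun t : ℝ => (t : ℂ) • X t) atTop (𝓝 P))
    (hYQ : Tendsto (fun t : ℝ => (t : ℂ) • Y t) atTop (𝓝 Q))
    (hP : ∀ t, X t * Pᴴ = X t) (hQ : ∀ t, Y t * Qᴴ = Y t) {s : ℝ} (hs : 0 < s) :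
    X s * σ = Y s * σ ∧ σ * X s = σ * Y s := by
  have hu := fun t (ht : 0 < t) => stat_unique ht hρ hσ (hX t ht) (hY t ht)
  refine ⟨?_, (hu s hs).2⟩
  have key : ∀ t : ℝ, 0 < t → X s * (((t : ℂ) • X t)ᴴ * σ) = Y s * (((t : ℂ) • Y t)ᴴ * σ) := by
    intro t ht
    have h1 : (X t)ᴴ * σ = (σ * X t)ᴴ := by simp [Matrix.conjTranspose_mul, hσ.1.eq]
    have h2 : (Y t)ᴴ * σ = (X t)ᴴ * σ := by
      rw [h1, (hu t ht).2]; simp [Matrix.conjTranspose_mul, hσ.1.eq]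
    have h3 : (X t)ᴴ * σ = ρ * (1 - (t : ℂ) • (X t)ᴴ) := by
      rw [h1, eq_sub_of_add_eq (hX t ht)]
      simp [Matrix.conjTranspose_mul, hρ.1.eq, Matrix.mul_sub, Matrix.conjTranspose_smul]
    rw [Matrix.conjTranspose_smul, Matrix.conjTranspose_smul, Matrix.smul_mul, Matrix.smul_mul,
      h2, h3, Matrix.mul_smul, Matrix.mul_smul, ← Matrix.mul_assoc, ← Matrix.mul_assoc,
      (hu s hs).1]
  have hcX : Continuous fun M : Matrix n n ℂ => X s * (Mᴴ * σ) := by fun_prop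
  have hcY : Continuous fun M : Matrix n n ℂ => Y s * (Mᴴ * σ) := by fun_prop
  have l1 := (hcX.tendsto _).comp hXP
  have l2 := (hcY.tendsto _).comp hYQ
  have := tendsto_nhds_unique_of_eventuallyEq l1 l2
    (by filter_upwards [eventually_gt_atTop 0] with t ht using key t ht)
  rwa [← Matrix.mul_assoc, ← Matrix.mul_assoc, hP, hQ] at this

lemma tendsto_emb (e : n ≃ k × m) {X : ℝ → Matrix m m ℂ} {P : Matrix m m ℂ}
    (h : Tendsto (fun t : ℝ => (t : ℂ) • X t) atTop (𝓝 P)) :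
    Tendsto (fun t : ℝ => (t : ℂ) • emb e (X t)) atTop (𝓝 (emb e P)) := by
  exact (((continuous_emb e).tendsto _).comp h).congr fun t => emb_smul e _ _

lemma emb_supp (e : n ≃ k × m) {X P : Matrix m m ℂ} (h : X * Pᴴ = X) :
    emb e X * (emb e P)ᴴ = emb e X := by
  rw [← emb_conjTranspose, ← emb_mul, h]

end Markov

/-! ### Tripartite splittings -/

section Tripartite

variable {A B C : Type*} [Fintype A] [DecidableEq A] [Fintype B] [DecidableEq B]
  [Fintype C] [DecidableEq C]

/-- The splitting of a bipartite system that keeps the first party. -/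
abbrev k1 : A × B ≃ B × A := Equiv.prodComm A B

/-- The splitting of a bipartite system that keeps the second party. -/
abbrev k2 : A × B ≃ A × B := Equiv.refl _

/-- The splitting of a tripartite system that keeps the first two parties. -/
@[simps]
def k12 : A × B × C ≃ C × (A × B) where
  toFun x := (x.2.2, (x.1, x.2.1))
  invFun y := (y.2.1, y.2.2, y.1)
  left_inv _ := rfl
  right_inv _ := rfl

/-- The splitting of a tripartite system that keeps the first and the last party. -/
@[simps]
def k13 : A × B × C ≃ B × (A × C) where
  toFun x := (x.2.1, (x.1, x.2.2))
  invFun y := (y.2.1, y.1, y.2.2)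
  left_inv _ := rfl
  right_inv _ := rfl

/-- The splitting of a tripartite system that keeps the last two parties. -/
abbrev k23 : A × B × C ≃ A × (B × C) := Equiv.refl _

lemma emb_k1_apply (x : Matrix A A ℂ) (a a' : A) (b b' : B) :
    emb k1 x (a, b) (a', b') = if b = b' then x a a' else 0 := rfl

lemma emb_k2_apply (x : Matrix B B ℂ) (a a' : A) (b b' : B) :
    emb k2 x (a, b) (a', b') = if a = a' then x b b' else 0 := rfl

lemma emb_k12_apply (x : Matrix (A × B) (A × B) ℂ) (a a' : A) (b b' : B) (c c' : C) :
    emb k12 x (a, b, c) (a', b', c') = if c = c' then x (a, b) (a', b') else 0 := rfl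

lemma emb_k13_apply (x : Matrix (A × C) (A × C) ℂ) (a a' : A) (b b' : B) (c c' : C) :
    emb k13 x (a, b, c) (a', b', c') = if b = b' then x (a, c) (a', c') else 0 := rfl

lemma emb_k23_apply (x : Matrix (B × C) (B × C) ℂ) (a a' : A) (b b' : B) (c c' : C) :
    emb k23 x (a, b, c) (a', b', c') = if a = a' then x (b, c) (b', c') else 0 := rfl

lemma emb12_emb2 (x : Matrix B B ℂ) :
    emb (k12 : A × B × C ≃ _) (emb k2 x) = emb k23 (emb k1 x) := by
  ext ⟨a, b, c⟩ ⟨a', b', c'⟩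
  by_cases h1 : a = a' <;> by_cases h2 : c = c' <;> simp [emb, h1, h2]

lemma emb12_emb1 (y : Matrix A A ℂ) :
    emb (k12 : A × B × C ≃ _) (emb k1 y) = emb k13 (emb k1 y) := by
  ext ⟨a, b, c⟩ ⟨a', b', c'⟩
  by_cases h1 : b = b' <;> by_cases h2 : c = c' <;> simp [emb, h1, h2]

lemma ptr13_emb23 (M : Matrix (B × C) (B × C) ℂ) :
    ptr (k13 : A × B × C ≃ _) (emb k23 M) = emb k2 (ptr k2 M) := by
  ext ⟨a, c⟩ ⟨a', c'⟩
  by_cases h1 : a = a' <;> simp [emb, ptr, h1]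

lemma ptr23_emb13 (M : Matrix (A × C) (A × C) ℂ) :
    ptr (k23 : A × B × C ≃ _) (emb k13 M) = emb k2 (ptr k2 M) := by
  ext ⟨a, c⟩ ⟨a', c'⟩
  by_cases h1 : a = a' <;> simp [emb, ptr, h1]

lemma ptr12_emb13 (M : Matrix (A × C) (A × C) ℂ) :
    ptr (k12 : A × B × C ≃ _) (emb k13 M) = emb k1 (ptr k1 M) := by
  ext ⟨a, c⟩ ⟨a', c'⟩
  by_cases h1 : c = c' <;> simp [emb, ptr, h1]

lemma ptr23_emb12 (M : Matrix (A × B) (A × B) ℂ) :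
    ptr (k23 : A × B × C ≃ _) (emb k12 M) = emb k1 (ptr k2 M) := by
  ext ⟨a, c⟩ ⟨a', c'⟩
  by_cases h1 : c = c' <;> simp [emb, ptr, h1]

lemma ptr13_emb12 (M : Matrix (A × B) (A × B) ℂ) :
    ptr (k13 : A × B × C ≃ _) (emb k12 M) = emb k1 (ptr k1 M) := by
  ext ⟨a, c⟩ ⟨a', c'⟩
  by_cases h1 : c = c' <;> simp [emb, ptr, h1]

lemma ptr2_ptr13 (N : Matrix (A × B × C) (A × B × C) ℂ) :
    ptr k2 (ptr k13 N) = ptr k2 (ptr k23 N) := by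
  ext c c'
  simp only [ptr, Matrix.of_apply]
  rw [Finset.sum_comm]
  rfl

lemma ptr1_ptr12 (N : Matrix (A × B × C) (A × B × C) ℂ) :
    ptr k1 (ptr k12 N) = ptr k1 (ptr k13 N) := by
  ext c c'
  simp only [ptr, Matrix.of_apply]
  rw [Finset.sum_comm]
  rfl

lemma ptr2_ptr12 (N : Matrix (A × B × C) (A × B × C) ℂ) :
    ptr k2 (ptr k12 N) = ptr k1 (ptr k23 N) := by
  ext c c'
  simp only [ptr, Matrix.of_apply]
  rw [Finset.sum_comm]
  rfl

lemma ptr13_comm (x : Matrix B B ℂ) (N : Matrix (A × B × C) (A × B × C) ℂ) :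
    ptr k13 (emb k23 (emb k1 x) * N) = ptr k13 (N * emb k23 (emb k1 x)) := by
  ext ⟨a, c⟩ ⟨a', c'⟩
  simp only [ptr, Matrix.of_apply, emb_mul_apply, mul_emb_apply, Fintype.sum_prod_type,
    k13_symm_apply, Equiv.refl_apply, Equiv.refl_symm]
  simp only [emb_k1_apply, ite_mul, mul_ite, zero_mul, mul_zero,
    Finset.sum_ite_eq, Finset.sum_ite_eq', Finset.mem_univ, if_true]
  rw [Finset.sum_comm]
  simp only [mul_comm]

lemma ptr23_comm (y : Matrix A A ℂ) (N : Matrix (A × B × C) (A × B × C) ℂ) :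
    ptr k23 (emb k13 (emb k1 y) * N) = ptr k23 (N * emb k13 (emb k1 y)) := by
  ext ⟨b, c⟩ ⟨b', c'⟩
  simp only [ptr, Matrix.of_apply, emb_mul_apply, mul_emb_apply, Fintype.sum_prod_type,
    k13_symm_apply, k13_apply, Equiv.refl_symm, Equiv.refl_apply]
  simp only [emb_k1_apply, ite_mul, mul_ite, zero_mul, mul_zero,
    Finset.sum_ite_eq, Finset.sum_ite_eq', Finset.mem_univ, if_true]
  rw [Finset.sum_comm]
  simp only [mul_comm]

lemma emb13_emb23_comm (y : Matrix A A ℂ) (M : Matrix (B × C) (B × C) ℂ) :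
    emb (k13 : A × B × C ≃ _) (emb k1 y) * emb k23 M = emb k23 M * emb k13 (emb k1 y) := by
  ext ⟨a, b, c⟩ ⟨a', b', c'⟩
  refine (emb_mul_apply _ _ _ _ _).trans (Eq.trans ?_ (mul_emb_apply _ _ _ _ _).symm)
  change ∑ z : A × C, (if c = z.2 then y a z.1 else 0) *
        (if z.1 = a' then M (b, z.2) (b', c') else 0) =
      ∑ z : A × C, (if a = z.1 then M (b, c) (b', z.2) else 0) *
        (if z.2 = c' then y z.1 a' else 0)
  rw [Finset.sum_eq_single (a', c), Finset.sum_eq_single (a, c')]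
  · simp [mul_comm]
  · rintro ⟨z, w⟩ - h
    by_cases h1 : a = z <;> by_cases h2 : w = c' <;> simp_all
  · simp
  · rintro ⟨z, w⟩ - h
    by_cases h1 : z = a' <;> by_cases h2 : c = w <;> simp_all
  · simp

lemma emb1_emb2_comm (y : Matrix A A ℂ) (z : Matrix B B ℂ) :
    emb (k1 : A × B ≃ _) y * emb k2 z = emb k2 z * emb k1 y := by
  ext ⟨a, b⟩ ⟨a', b'⟩
  rw [emb_mul_apply, mul_emb_apply]
  simp only [Equiv.prodComm_apply, Equiv.prodComm_symm, Prod.swap_prod_mk, emb_k2_apply,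
    mul_ite, ite_mul, zero_mul, mul_zero, Finset.sum_ite_eq, Finset.sum_ite_eq',
    Finset.mem_univ, if_true]
  rw [mul_comm]

end Tripartite

/-! ### Transferring operators from one party to another -/

section Core

variable {A B C D : Type*} [Fintype A] [DecidableEq A] [Fintype B] [DecidableEq B]
  [Fintype C] [DecidableEq C] [Fintype D] [DecidableEq D]

/-- If `I(A:B|D) = 0` and `x` on `B` and `y` on `A` act in the same way on the state from both
sides, then `y` acts on the right of `ρ_AD` like an operator on `D`, up to the weight `ρ_D`.
The vanishing of `I(A:B|D)` enters through the stationary points `W`. -/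
lemma transfer_aux {ρ : Matrix (A × B × D) (A × B × D) ℂ} {x : Matrix B B ℂ} {y : Matrix A A ℂ}
    (h1 : emb k23 (emb k1 x) * ρ = emb k13 (emb k1 y) * ρ)
    (h2 : ρ * emb k23 (emb k1 x) = ρ * emb k13 (emb k1 y))
    {W : ℝ → Matrix (B × D) (B × D) ℂ} {P : Matrix (B × D) (B × D) ℂ}
    (hlim : Tendsto (fun t : ℝ => (t : ℂ) • W t) atTop (𝓝 P))
    (hproj : P * ptr k23 ρ = ptr k23 ρ)
    (hW : ∀ t, 0 < t → Stat t ρ (emb k13 (ptr k13 ρ)) (emb k23 (W t))) :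
    emb k1 x * ptr k23 ρ = ptr k23 ρ * emb k1 x ∧
    ptr k13 ρ * emb k1 y * emb k2 (ptr k2 (ptr k23 ρ)) =
      ptr k13 ρ * emb k2 (ptr k2 (emb k1 x * ptr k23 ρ)) := by
  have hcx : emb k1 x * ptr k23 ρ = ptr k23 ρ * emb k1 x := by
    rw [← ptr_emb_mul, h1, ptr23_comm, ← h2, ptr_mul_emb]
  refine ⟨hcx, ?_⟩
  set S := emb (k13 : A × B × D ≃ _) (ptr k13 ρ) with hS
  set X := emb (k23 : A × B × D ≃ _) (emb k1 x) with hX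
  set Y := emb (k13 : A × B × D ≃ _) (emb k1 y) with hY
  have h4 : ∀ t : ℝ, 0 < t → S * Y * ((t : ℂ) • emb k23 (W t)) =
      S * ((t : ℂ) • emb k23 (W t)) * X := by
    intro t ht
    have hst := hW t ht
    rw [Stat] at hst
    have hx := congrArg (· * X) hst
    have hy := congrArg (· * Y) hst
    simp only [Matrix.add_mul, Matrix.smul_mul, Matrix.mul_assoc, h2] at hx hy
    have h5 : S * (emb k23 (W t) * X) = S * (emb k23 (W t) * Y) :=
      add_right_cancel (hx.trans hy.symm)
    rw [Matrix.mul_smul, Matrix.mul_smul, Matrix.smul_mul, Matrix.mul_assoc, Matrix.mul_assoc,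
      h5, hY, emb13_emb23_comm]
  have hc1 : Continuous fun M : Matrix (A × B × D) (A × B × D) ℂ => S * Y * M := by fun_prop
  have hc2 : Continuous fun M : Matrix (A × B × D) (A × B × D) ℂ => S * M * X := by fun_prop
  have hl := tendsto_emb (k23 : A × B × D ≃ _) hlim
  have h5 : S * Y * emb k23 P = S * emb k23 P * X :=
    tendsto_nhds_unique_of_eventuallyEq ((hc1.tendsto _).comp hl) ((hc2.tendsto _).comp hl)
      (by filter_upwards [eventually_gt_atTop 0] with t ht using h4 t ht)
  have h6 : S * Y * emb k23 (ptr k23 ρ) = S * (X * emb k23 (ptr k23 ρ)) := by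
    have h7 := congrArg (· * emb k23 (ptr k23 ρ)) h5
    have hXc : X * emb k23 (ptr k23 ρ) = emb k23 (ptr k23 ρ) * X := by
      rw [hX, ← emb_mul, hcx, emb_mul]
    have hPP : emb k23 P * emb (k23 : A × B × D ≃ _) (ptr k23 ρ) = emb k23 (ptr k23 ρ) := by
      rw [← emb_mul, hproj]
    simp only [Matrix.mul_assoc] at h7 ⊢
    rw [hPP, hXc, ← Matrix.mul_assoc (emb k23 P), hPP] at h7
    rw [h7, hXc]
  have h8 := congrArg (ptr k13) h6
  rw [hS, hY, ← emb_mul, ptr_emb_mul, ptr13_emb23, hX, ← emb_mul, ptr_emb_mul, ptr13_emb23] at h8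
  exact h8

/-- If `I(A:B|D) = 0` and `x` on `B` and `y` on `A` act in the same way on the state from both
sides, then some operator `z` on `D` acts on `ρ_AD` in the same way as `y`. -/
lemma transfer {ρ : Matrix (A × B × D) (A × B × D) ℂ} (hρ : ρ.PosSemidef) {x : Matrix B B ℂ}
    {y : Matrix A A ℂ}
    (h1 : emb k23 (emb k1 x) * ρ = emb k13 (emb k1 y) * ρ)
    (h2 : ρ * emb k23 (emb k1 x) = ρ * emb k13 (emb k1 y))
    {W : ℝ → Matrix (B × D) (B × D) ℂ} {P : Matrix (B × D) (B × D) ℂ}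
    (hlim : Tendsto (fun t : ℝ => (t : ℂ) • W t) atTop (𝓝 P))
    (hproj : P * ptr k23 ρ = ptr k23 ρ)
    (hW : ∀ t, 0 < t → Stat t ρ (emb k13 (ptr k13 ρ)) (emb k23 (W t))) :
    ∃ z : Matrix D D ℂ, emb k1 y * ptr k13 ρ = emb k2 z * ptr k13 ρ ∧
      ptr k13 ρ * emb k1 y = ptr k13 ρ * emb k2 z := by
  obtain ⟨hcx, hs⟩ := transfer_aux h1 h2 hlim hproj hW
  have hAD := ptr_posSemidef k13 hρ
  have hBD := ptr_posSemidef k23 hρ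
  have hstar := (transfer_aux (x := xᴴ) (y := yᴴ) (ρ := ρ)
    (by
      have := congrArg Matrix.conjTranspose h2
      simpa only [Matrix.conjTranspose_mul, ← emb_conjTranspose, hρ.1.eq] using this)
    (by
      have := congrArg Matrix.conjTranspose h1
      simpa only [Matrix.conjTranspose_mul, ← emb_conjTranspose, hρ.1.eq] using this)
    hlim hproj hW).2
  set τ := ptr (k13 : A × B × D ≃ _) ρ with hτ
  set rD := ptr k2 (ptr (k23 : A × B × D ≃ _) ρ) with hrD
  set xD := ptr k2 (emb k1 x * ptr (k23 : A × B × D ≃ _) ρ) with hxD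
  have hrDτ : ptr k2 τ = rD := ptr2_ptr13 ρ
  have hDp : rD.PosSemidef := ptr_posSemidef _ hBD
  -- the adjoint form of the weighted relation
  have hs' : emb k2 rD * emb k1 y * τ = emb k2 xD * τ := by
    have := congrArg Matrix.conjTranspose hstar
    have e1 : ptr k2 (emb k1 xᴴ * ptr (k23 : A × B × D ≃ _) ρ) = xDᴴ := by
      rw [hxD, ← ptr_conjTranspose, hcx, Matrix.conjTranspose_mul, hBD.1.eq, emb_conjTranspose]
    rw [e1] at this
    simpa only [Matrix.conjTranspose_mul, ← emb_conjTranspose, hAD.1.eq, hDp.1.eq,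
      Matrix.conjTranspose_conjTranspose, Matrix.mul_assoc] using this
  have hcD : xD * rD = rD * xD := by
    have h3 := congrArg (ptr k2) hs
    rw [ptr_mul_emb, ptr_mul_emb, hrDτ] at h3
    have h4 : ptr k2 (τ * emb k1 y) = xD := by
      rw [hτ, ← ptr_mul_emb, ← h2, ptr2_ptr13, ptr_mul_emb, hxD, hcx]
    rw [h4] at h3
    exact h3
  obtain ⟨R, hRh, hRc, hR⟩ := exists_pinv hDp.1
  have hl : emb k2 (rD * R) * τ = τ := by
    have := emb_supp_mul k2 hAD (R := R) (by rw [hrDτ]; exact hR)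
    rwa [hrDτ] at this
  have hr : τ * emb k2 (rD * R) = τ := by
    have := congrArg Matrix.conjTranspose hl
    rw [Matrix.conjTranspose_mul, ← emb_conjTranspose, Matrix.conjTranspose_mul, hRh, hDp.1.eq,
      hAD.1.eq, ← hRc] at this
    exact this
  refine ⟨R * xD * (rD * R), ?_, ?_⟩
  · have h3 := congrArg (emb k2 R * ·) hs'
    rw [← Matrix.mul_assoc, ← Matrix.mul_assoc, ← emb_mul, ← hRc, ← emb1_emb2_comm,
      Matrix.mul_assoc, hl, ← Matrix.mul_assoc, ← emb_mul] at h3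
    rw [h3, emb_mul _ (R * xD), Matrix.mul_assoc, hl]
  · have h3 := congrArg (· * emb k2 R) hs
    rw [Matrix.mul_assoc, ← emb_mul, Matrix.mul_assoc, emb1_emb2_comm, ← Matrix.mul_assoc, hr,
      Matrix.mul_assoc, ← emb_mul] at h3
    have h4 : R * xD * (rD * R) = rD * R * (xD * R) := by
      rw [← Matrix.mul_assoc, Matrix.mul_assoc R, hcD, hRc]
      simp only [Matrix.mul_assoc]
    rw [h3, h4, emb_mul _ (rD * R), ← Matrix.mul_assoc τ, hr]

/-- The block of an operator on `A ⊗ C` with respect to two basis vectors of `C`. -/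
def slice (Y : Matrix (A × C) (A × C) ℂ) (c c' : C) : Matrix A A ℂ :=
  Matrix.of fun a a' => Y (a, c) (a', c')

lemma emb23_mul_emb12 (X : Matrix (B × C) (B × C) ℂ) (M : Matrix (A × B) (A × B) ℂ) (a a' : A)
    (b b' : B) (c c' : C) : (emb k23 X * emb k12 M : Matrix (A × B × C) (A × B × C) ℂ)
      (a, b, c) (a', b', c') =
      (emb k2 (slice X c c') * M : Matrix (A × B) (A × B) ℂ) (a, b) (a', b') := by
  simp only [emb_mul_apply, Fintype.sum_prod_type, Equiv.refl_apply, Equiv.refl_symm,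
    emb_k12_apply, mul_ite, mul_zero, Finset.sum_ite_eq', Finset.mem_univ, if_true, slice,
    Matrix.of_apply]

lemma emb13_mul_emb12 (Y : Matrix (A × C) (A × C) ℂ) (M : Matrix (A × B) (A × B) ℂ) (a a' : A)
    (b b' : B) (c c' : C) : (emb k13 Y * emb k12 M : Matrix (A × B × C) (A × B × C) ℂ)
      (a, b, c) (a', b', c') =
      (emb k1 (slice Y c c') * M : Matrix (A × B) (A × B) ℂ) (a, b) (a', b') := by
  simp only [emb_mul_apply, Fintype.sum_prod_type, k13_apply, k13_symm_apply,
    Equiv.prodComm_apply, Equiv.prodComm_symm, Prod.swap_prod_mk,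
    emb_k12_apply, mul_ite, mul_zero, Finset.sum_ite_eq', Finset.mem_univ, if_true, slice,
    Matrix.of_apply]

lemma emb12_mul_emb23 (X : Matrix (B × C) (B × C) ℂ) (M : Matrix (A × B) (A × B) ℂ) (a a' : A)
    (b b' : B) (c c' : C) : (emb k12 M * emb k23 X : Matrix (A × B × C) (A × B × C) ℂ)
      (a, b, c) (a', b', c') =
      (M * emb k2 (slice X c c') : Matrix (A × B) (A × B) ℂ) (a, b) (a', b') := by
  simp only [mul_emb_apply, Fintype.sum_prod_type, Equiv.refl_apply, Equiv.refl_symm,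
    emb_k12_apply, ite_mul, zero_mul, Finset.sum_ite_eq, Finset.mem_univ, if_true, slice,
    Matrix.of_apply]

lemma emb12_mul_emb13 (Y : Matrix (A × C) (A × C) ℂ) (M : Matrix (A × B) (A × B) ℂ) (a a' : A)
    (b b' : B) (c c' : C) : (emb k12 M * emb k13 Y : Matrix (A × B × C) (A × B × C) ℂ)
      (a, b, c) (a', b', c') =
      (M * emb k1 (slice Y c c') : Matrix (A × B) (A × B) ℂ) (a, b) (a', b') := by
  simp only [mul_emb_apply, Fintype.sum_prod_type, k13_apply, k13_symm_apply,
    Equiv.prodComm_apply, Equiv.prodComm_symm, Prod.swap_prod_mk,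
    emb_k12_apply, ite_mul, zero_mul, Finset.sum_ite_eq, Finset.mem_univ, if_true, slice,
    Matrix.of_apply]

/-- The operator on `C ⊗ D` with prescribed blocks on `D`. -/
def glue (z : C → C → Matrix D D ℂ) : Matrix (C × D) (C × D) ℂ :=
  Matrix.of fun p q => z p.1 q.1 p.2 q.2

/-- Blockwise agreement of `Y` on `A ⊗ C` with operators `z` on `D`, from the left on `M` on
`A ⊗ D`, glues to agreement on the tripartite system. -/
lemma glue_left {Y : Matrix (A × C) (A × C) ℂ} {z : C → C → Matrix D D ℂ}
    {M : Matrix (A × D) (A × D) ℂ}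
    (h : ∀ c c', emb k1 (slice Y c c') * M = emb k2 (z c c') * M) :
    emb (k12 : A × C × D ≃ _) Y * emb k13 M = emb k23 (glue z) * emb k13 M := by
  ext ⟨a, c, d⟩ ⟨a', c', d'⟩
  have := congrFun (congrFun (h c c') (a, d)) (a', d')
  simp only [emb_mul_apply, Fintype.sum_prod_type, k12_apply, k12_symm_apply, Equiv.refl_apply,
    Equiv.refl_symm, Equiv.prodComm_apply, Equiv.prodComm_symm, Prod.swap_prod_mk,
    emb_k13_apply, mul_ite, mul_zero, slice, glue, Matrix.of_apply] at this ⊢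
  simpa only [Finset.sum_ite_irrel, Finset.sum_const_zero, Finset.sum_ite_eq',
    Finset.mem_univ, if_true] using this

lemma glue_right {Y : Matrix (A × C) (A × C) ℂ} {z : C → C → Matrix D D ℂ}
    {M : Matrix (A × D) (A × D) ℂ}
    (h : ∀ c c', M * emb k1 (slice Y c c') = M * emb k2 (z c c')) :
    emb k13 M * emb (k12 : A × C × D ≃ _) Y = emb k13 M * emb k23 (glue z) := by
  ext ⟨a, c, d⟩ ⟨a', c', d'⟩
  have := congrFun (congrFun (h c c') (a, d)) (a', d')
  simp only [mul_emb_apply, Fintype.sum_prod_type, k12_apply, k12_symm_apply, Equiv.refl_apply,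
    Equiv.refl_symm, Equiv.prodComm_apply, Equiv.prodComm_symm, Prod.swap_prod_mk,
    emb_k13_apply, ite_mul, zero_mul, slice, glue, Matrix.of_apply] at this ⊢
  simpa only [Finset.sum_ite_irrel, Finset.sum_const_zero, Finset.sum_ite_eq,
    Finset.mem_univ, if_true] using this

end Core

/-! ### The constrained entropy inequality -/

section Constrained

variable {A B C D n k m : Type*} [Fintype A] [DecidableEq A] [Fintype B] [DecidableEq B]
  [Fintype C] [DecidableEq C] [Fintype D] [DecidableEq D] [Fintype n] [DecidableEq n]
  [Fintype k] [DecidableEq k] [Fintype m] [DecidableEq m]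

lemma mul_eq_of_marginal (e : n ≃ k × m) {ρ M N : Matrix n n ℂ} (h : ρ.PosSemidef)
    (hM : M * emb e (ptr e ρ) = N * emb e (ptr e ρ)) : M * ρ = N * ρ := by
  rw [← sub_eq_zero, ← Matrix.sub_mul]
  apply mul_eq_zero_of_marginal e h
  rw [Matrix.sub_mul, hM, sub_self]

lemma eq_mul_of_marginal (e : n ≃ k × m) {ρ M N : Matrix n n ℂ} (h : ρ.PosSemidef)
    (hM : emb e (ptr e ρ) * M = emb e (ptr e ρ) * N) : ρ * M = ρ * N := by
  have hm := (emb_posSemidef e (ptr_posSemidef e h)).1.eq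
  have h1 : Mᴴ * emb e (ptr e ρ) = Nᴴ * emb e (ptr e ρ) := by
    have := congrArg Matrix.conjTranspose hM
    rwa [Matrix.conjTranspose_mul, Matrix.conjTranspose_mul, hm] at this
  have h2 := congrArg Matrix.conjTranspose (mul_eq_of_marginal e h h1)
  simpa only [Matrix.conjTranspose_mul, Matrix.conjTranspose_conjTranspose, h.1.eq] using h2

/-- A constrained entropy inequality: if `I(A:C|B) = I(B:C|A) = I(A:B|D) = 0`, then
`I(A:C) ≤ I(C:D)`, written as `S(A) - S(AC) ≤ S(D) - S(CD)`. Only the three marginals `ABC`,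
`ABD`, `ACD` are needed, with matching two-party marginals. -/
theorem constrained {α : Matrix (A × B × C) (A × B × C) ℂ}
    {β : Matrix (A × B × D) (A × B × D) ℂ} {γ : Matrix (A × C × D) (A × C × D) ℂ}
    (hα : α.PosSemidef) (hβ : β.PosSemidef) (hγ : γ.PosSemidef)
    (hAB : ptr k12 α = ptr k12 β) (hAC : ptr k13 α = ptr k12 γ) (hAD : ptr k13 β = ptr k13 γ)
    (h1 : vNEntropy α + vNEntropy (ptr k1 (ptr k23 α)) =
      vNEntropy (ptr k12 α) + vNEntropy (ptr k23 α))
    (h2 : vNEntropy α + vNEntropy (ptr k1 (ptr k13 α)) =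
      vNEntropy (ptr k12 α) + vNEntropy (ptr k13 α))
    (h3 : vNEntropy β + vNEntropy (ptr k2 (ptr k23 β)) =
      vNEntropy (ptr k13 β) + vNEntropy (ptr k23 β)) :
    vNEntropy (ptr k1 (ptr k12 γ)) - vNEntropy (ptr k12 γ) ≤
      vNEntropy (ptr k2 (ptr k23 γ)) - vNEntropy (ptr k23 γ) := by
  obtain ⟨X, P, hX⟩ := exists_rel k1 (ptr_posSemidef k23 hα)
  obtain ⟨Y, Q, hY⟩ := exists_rel k1 (ptr_posSemidef k13 hα)
  obtain ⟨W, T, hW⟩ := exists_rel k2 (ptr_posSemidef k23 hβ)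
  obtain ⟨V, O, hV⟩ := exists_rel k2 (ptr_posSemidef k23 hγ)
  have mX : ∀ t, 0 < t → Stat t α (emb k12 (ptr k12 α)) (emb k23 (X t)) := fun t ht =>
    markov k23 k12 k1 hα (by rw [ptr23_emb12, ptr2_ptr12]) h1 hX ht
  have mY : ∀ t, 0 < t → Stat t α (emb k12 (ptr k12 α)) (emb k13 (Y t)) := fun t ht =>
    markov k13 k12 k1 hα (by rw [ptr13_emb12, ptr1_ptr12]) h2 hY ht
  have mW : ∀ t, 0 < t → Stat t β (emb k13 (ptr k13 β)) (emb k23 (W t)) := fun t ht =>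
    markov k23 k13 k2 hβ (by rw [ptr23_emb13, ptr2_ptr13]) h3 hW ht
  have hle : ∀ t, 0 < t → (Y t * ptr k13 α).trace.re ≤ (V t * ptr k23 γ).trace.re := by
    intro t ht
    obtain ⟨hl, hr⟩ := stat_agree hα (emb_posSemidef k12 (ptr_posSemidef k12 hα)) mX mY
      (tendsto_emb k23 hX.res.lim) (tendsto_emb k13 hY.res.lim)
      (fun t => emb_supp k23 (hX.res.supp t)) (fun t => emb_supp k13 (hY.res.supp t)) ht
    -- every block of `Y t` acts on `ρ_AD` like an operator on `D`
    have hz : ∀ c c', ∃ z : Matrix D D ℂ,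
        emb k1 (slice (Y t) c c') * ptr k13 β = emb k2 z * ptr k13 β ∧
        ptr k13 β * emb k1 (slice (Y t) c c') = ptr k13 β * emb k2 z := by
      intro c c'
      have hl' : emb k2 (slice (X t) c c') * ptr k12 α =
          emb k1 (slice (Y t) c c') * ptr k12 α := by
        ext ⟨a, b⟩ ⟨a', b'⟩
        rw [← emb23_mul_emb12, hl, emb13_mul_emb12]
      have hr' : ptr k12 α * emb k2 (slice (X t) c c') =
          ptr k12 α * emb k1 (slice (Y t) c c') := by
        ext ⟨a, b⟩ ⟨a', b'⟩
        rw [← emb12_mul_emb23, hr, emb12_mul_emb13]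
      rw [hAB] at hl' hr'
      refine transfer hβ (x := slice (X t) c c') ?_ ?_ hW.res.lim hW.res.proj mW
      · rw [← emb12_emb2, ← emb12_emb1]
        apply mul_eq_of_marginal k12 hβ
        rw [← emb_mul, hl', emb_mul]
      · rw [← emb12_emb2, ← emb12_emb1]
        apply eq_mul_of_marginal k12 hβ
        rw [← emb_mul, hr', emb_mul]
    choose z hzl hzr using hz
    rw [hAD] at hzl hzr
    have hm := ptr_posSemidef k13 hγ
    have hf : func t γ (emb k13 (ptr k13 γ)) (emb k12 (Y t)) =
        func t γ (emb k13 (ptr k13 γ)) (emb k23 (glue z)) :=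
      func_congr hγ.1 (mul_eq_of_marginal k13 hγ (glue_left hzl)) (glue_right hzr)
        (emb_posSemidef k13 hm).1
    rw [func_emb, func_emb, ptr12_emb13, ptr23_emb13, ptr2_ptr13, ← ptr1_ptr12, ← hAC,
      func_stat (ptr_posSemidef k13 hα).1
        (emb_posSemidef k1 (ptr_posSemidef k1 (ptr_posSemidef k13 hα))).1
        (hY.res.stat t ht)] at hf
    rw [hf]
    exact func_le ht (ptr_posSemidef k23 hγ)
      (emb_posSemidef k2 (ptr_posSemidef k2 (ptr_posSemidef k23 hγ))) (hV.res.stat t ht) _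
  have hcmp := (Rel.compare hV hY (by rw [hAC, trace_ptr, trace_ptr]) hle).1
  rw [hAC] at hcmp
  exact le_of_mul_le_mul_left hcmp (Real.log_pos one_lt_two)

end Constrained

/-! ### Marginals of a four-party state -/

section Marginals

variable {A B C D : Type*}

/-- The splitting of a four-party system that keeps the parties `A`, `B`, `C`. -/
def kABC : A × B × C × D ≃ D × (A × B × C) where
  toFun x := (x.2.2.2, (x.1, x.2.1, x.2.2.1))
  invFun y := (y.2.1, y.2.2.1, y.2.2.2, y.1)
  left_inv _ := rfl
  right_inv _ := rfl

/-- The splitting of a four-party system that keeps the parties `A`, `B`, `D`. -/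
def kABD : A × B × C × D ≃ C × (A × B × D) where
  toFun x := (x.2.2.1, (x.1, x.2.1, x.2.2.2))
  invFun y := (y.2.1, y.2.2.1, y.1, y.2.2.2)
  left_inv _ := rfl
  right_inv _ := rfl

/-- The splitting of a four-party system that keeps the parties `A`, `C`, `D`. -/
def kACD : A × B × C × D ≃ B × (A × C × D) where
  toFun x := (x.2.1, (x.1, x.2.2.1, x.2.2.2))
  invFun y := (y.2.1, y.1, y.2.2.1, y.2.2.2)
  left_inv _ := rfl
  right_inv _ := rfl

variable [Fintype A] [Fintype B] [Fintype C] [Fintype D]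
  (ρ : Matrix (A × B × C × D) (A × B × C × D) ℂ)

lemma marginal_AB : ptr k12 (ptr kABC ρ) = ptr k12 (ptr kABD ρ) := by
  ext i j
  simp only [ptr, Matrix.of_apply]
  rw [Finset.sum_comm]
  rfl

lemma marginal_AC : ptr k13 (ptr kABC ρ) = ptr k12 (ptr kACD ρ) := by
  ext i j
  simp only [ptr, Matrix.of_apply]
  rw [Finset.sum_comm]
  rfl

lemma marginal_AD : ptr k13 (ptr kABD ρ) = ptr k13 (ptr kACD ρ) := by
  ext i j
  simp only [ptr, Matrix.of_apply]
  rw [Finset.sum_comm]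
  rfl

lemma marginal_A : ptr k1 (ptr k13 (ptr kABC ρ)) =
    Matrix.of fun a a' => ∑ b, ∑ c, ∑ d, ρ (a, b, c, d) (a', b, c, d) := by
  ext i j
  simp only [ptr, Matrix.of_apply]
  rw [Finset.sum_comm]
  rfl

lemma marginal_B : ptr k1 (ptr k23 (ptr kABC ρ)) =
    Matrix.of fun b b' => ∑ a, ∑ c, ∑ d, ρ (a, b, c, d) (a, b', c, d) := by
  ext i j
  simp only [ptr, Matrix.of_apply]
  rw [Finset.sum_comm]
  rfl

lemma marginal_D : ptr k2 (ptr k23 (ptr kABD ρ)) =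
    Matrix.of fun d d' => ∑ a, ∑ b, ∑ c, ρ (a, b, c, d) (a, b, c, d') := by
  ext i j
  simp only [ptr, Matrix.of_apply]
  rw [Finset.sum_comm]
  rfl

lemma marginal_D_of_ACD : ptr k2 (ptr k23 (ptr kACD ρ)) =
    Matrix.of fun d d' => ∑ a, ∑ b, ∑ c, ρ (a, b, c, d) (a, b, c, d') := by
  ext i j
  simp only [ptr, Matrix.of_apply]
  rw [Finset.sum_comm]
  refine Finset.sum_congr rfl fun a _ => ?_
  rw [Finset.sum_comm]
  rfl

end Marginals

end RayI

/-- **Corollary (ray I).** No quadripartite state on finite-dimensional Hilbert spaces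
has entropy vector `t · (3,3,2,2,4,3,3,3,3,4,4,4,3,3,2)` for some `t > 0`
(marginals ordered `A,B,C,D,AB,AC,AD,BC,BD,CD,ABC,ABD,ACD,BCD,ABCD`). -/
theorem no_state_on_ray_I :
    ¬ ∃ (dA dB dC dD : ℕ)
        (ρ : Matrix (Fin dA × Fin dB × Fin dC × Fin dD)
                    (Fin dA × Fin dB × Fin dC × Fin dD) ℂ)
        (t : ℝ), 0 < t ∧ IsState ρ ∧
      SA ρ = t * 3 ∧ SB ρ = t * 3 ∧ SC ρ = t * 2 ∧ SD ρ = t * 2 ∧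
      SAB ρ = t * 4 ∧ SAC ρ = t * 3 ∧ SAD ρ = t * 3 ∧ SBC ρ = t * 3 ∧
      SBD ρ = t * 3 ∧ SCD ρ = t * 4 ∧ SABC ρ = t * 4 ∧ SABD ρ = t * 4 ∧
      SACD ρ = t * 3 ∧ SBCD ρ = t * 3 ∧ SABCD ρ = t * 2 := by
  rintro ⟨dA, dB, dC, dD, ρ, t, ht, hρ, hA, hB, -, hD, hAB, hAC, hAD, hBC, hBD, hCD, hABC,
    hABD, -, -, -⟩
  open RayI in
  have key := constrained (ptr_posSemidef kABC hρ.1) (ptr_posSemidef kABD hρ.1)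
    (ptr_posSemidef kACD hρ.1) (marginal_AB ρ) (marginal_AC ρ) (marginal_AD ρ)
  rw [← RayI.marginal_AC, RayI.marginal_A, RayI.marginal_B, RayI.marginal_D,
    RayI.marginal_D_of_ACD] at key
  have hle := key
    (show SABC ρ + SB ρ = SAB ρ + SBC ρ by rw [hABC, hB, hAB, hBC])
    (show SABC ρ + SA ρ = SAB ρ + SAC ρ by rw [hABC, hA, hAB, hAC])
    (show SABD ρ + SD ρ = SAD ρ + SBD ρ by rw [hABD, hD, hAD, hBD]; ring)
  change SA ρ - SAC ρ ≤ SD ρ - SCD ρ at hle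
  rw [hA, hAC, hD, hCD] at hle
  linarith
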